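/- Let X be a real Banach space that is uniformly convex and uniformly smooth, let 1 < p < ∞, and let M, N be closed linear subspaces of X. For every x ∈ X, the sequence generated by x₀ = x, x_{2n+1} = Π^p_M x_{2n}, x_{2n} = Π^p_N x_{2n−1} is Bregman monotone with respect to the closed linear subspace M ∩ N, i.e., D_p(z, x_k) ≤ D_p(z, x_l) for all k ≥ l and all z ∈ M ∩ N. -/

import Mathlib

open Filter Topology

noncomputable section

/-- The modulus of convexity of a normed space `X`. -/
def modConvex (X : Type*) [NormedAddCommGroup X] (ε : ℝ) : ℝ :=
  sInf {d : ℝ | ∃ x y : X, ‖x‖ = 1 ∧ ‖y‖ = 1 ∧ ε ≤ ‖x - y‖ ∧ d = 1 - ‖x + y‖ / 2}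

/-- The modulus of smoothness of a normed space `X`. -/
def modSmooth (X : Type*) [NormedAddCommGroup X] [NormedSpace ℝ X] (τ : ℝ) : ℝ :=
  sSup {d : ℝ | ∃ x y : X, ‖x‖ = 1 ∧ ‖y‖ = 1 ∧ d = (‖x + τ • y‖ + ‖x - τ • y‖) / 2 - 1}

/-- `X` is uniformly convex: the modulus of convexity is positive for positive ε. -/
def UnifConvex (X : Type*) [NormedAddCommGroup X] : Prop :=
  ∀ ε : ℝ, 0 < ε → ε ≤ 2 → 0 < modConvex X ε

/-- `X` is uniformly smooth: `ρ_X(τ)/τ → 0` as `τ → 0⁺`. -/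
def UnifSmooth (X : Type*) [NormedAddCommGroup X] [NormedSpace ℝ X] : Prop :=
  Tendsto (fun τ => modSmooth X τ / τ) (𝓝[>] (0 : ℝ)) (𝓝 0)

/-- `X` is uniformly convex of power type `ρ`. -/
def PowerConvex (X : Type*) [NormedAddCommGroup X] (ρ : ℝ) : Prop :=
  ∃ c > (0 : ℝ), ∀ ε ∈ Set.Icc (0 : ℝ) 2, c * ε ^ ρ ≤ modConvex X ε

/-- `X` is uniformly smooth of power type `σ` (with `σ > 1`). -/
def PowerSmooth (X : Type*) [NormedAddCommGroup X] [NormedSpace ℝ X] (σ : ℝ) : Prop :=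
  1 < σ ∧ ∃ C > (0 : ℝ), ∀ τ ∈ Set.Icc (0 : ℝ) 1, modSmooth X τ ≤ C * τ ^ σ

variable {X : Type*} [NormedAddCommGroup X] [NormedSpace ℝ X]

/-- The duality mapping `j_p`, the Fréchet derivative of `x ↦ (1/p)‖x‖^p`. -/
def dualityMap (p : ℝ) (x : X) : X →L[ℝ] ℝ :=
  fderiv ℝ (fun y : X => 1 / p * ‖y‖ ^ p) x

/-- The Bregman distance `D_p(x, y)`. -/
def bregmanDist (p : ℝ) (x y : X) : ℝ :=
  1 / p * ‖x‖ ^ p - 1 / p * ‖y‖ ^ p - dualityMap p y (x - y)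

/-- The Bregman projection of `x` onto the set `S`: the minimizer of `m ↦ D_p(m, x)` over `S`. -/
def bregmanProj (p : ℝ) (S : Set X) (x : X) : X :=
  letI : Nonempty X := ⟨x⟩
  Classical.epsilon fun y => y ∈ S ∧ ∀ m ∈ S, bregmanDist p y x ≤ bregmanDist p m x

/-- The Bregman distance `D_p(S, x)` from the point `x` to the set `S`. -/
def bregmanDistSet (p : ℝ) (S : Set X) (x : X) : ℝ :=
  bregmanDist p (bregmanProj p S x) x

/-- The metric projection of `x` onto the set `S`: the point of `S` nearest to `x`. -/
def metricProj (S : Set X) (x : X) : X :=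
  letI : Nonempty X := ⟨x⟩
  Classical.epsilon fun y => y ∈ S ∧ ∀ m ∈ S, ‖x - y‖ ≤ ‖x - m‖

/-- The sequence `x` is Bregman monotone with respect to the set `C`. -/
def BregmanMonotone (p : ℝ) {X : Type*} [NormedAddCommGroup X] [NormedSpace ℝ X]
    (C : Set X) (x : ℕ → X) : Prop :=
  ∀ z ∈ C, ∀ k l : ℕ, l ≤ k → bregmanDist p z (x k) ≤ bregmanDist p z (x l)

/-!
If `y` is a minimizer of `D_p(·, x)` over a convex set `S`, the first order condition reads
`⟨j_p(y) - j_p(x), z - y⟩ ≥ 0` for `z ∈ S`. Inserted in the three-point identity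
`D_p(z, x) = D_p(z, y) + D_p(y, x) + ⟨j_p(y) - j_p(x), z - y⟩`, it gives
`D_p(z, y) ≤ D_p(z, x)`, since `D_p(y, x) ≥ 0` by convexity of `‖·‖ ^ p`. Thus projecting onto a
convex set containing `z` does not increase the Bregman distance to `z`.

The projections exist because a coercive convex function on a closed convex subset of a uniformly
convex Banach space attains its minimum: its sublevel sets are bounded, closed and convex, and in
a nested sequence of such sets points of almost minimal norm form a Cauchy sequence.

Uniform smoothness makes the norm Fréchet differentiable away from `0`: the linearization error of
a norming functional at `x` lies between `0` and `‖x + h‖ + ‖x - h‖ - 2‖x‖ = o(h)`.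
-/

section UniformlyConvex

variable {E : Type*} [SeminormedAddCommGroup E] [NormedSpace ℝ E] [UniformConvexSpace E]

lemma tendsto_norm_sub_zero_of_norm_le_one {ι : Type*} {l : Filter ι} {x y : ι → E}
    (hx : ∀ i, ‖x i‖ ≤ 1) (hy : ∀ i, ‖y i‖ ≤ 1)
    (hxy : Tendsto (fun i ↦ ‖x i + y i‖) l (𝓝 2)) :
    Tendsto (fun i ↦ ‖x i - y i‖) l (𝓝 0) := by
  refine Metric.tendsto_nhds.2 fun ε hε ↦ ?_
  obtain ⟨δ, hδ, h⟩ := exists_forall_closed_ball_dist_add_le_two_sub E hε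
  filter_upwards [hxy.eventually_const_lt (sub_lt_self 2 hδ)] with i hi
  rw [Real.dist_0_eq_abs, abs_norm]
  by_contra! hfar
  exact (h (hx i) (hy i) hfar).not_gt hi

lemma tendsto_norm_sub_zero_of_tendsto_norm_add {ι : Type*} {l : Filter ι} {x y : ι → E} {d : ℝ}
    (hx : Tendsto (fun i ↦ ‖x i‖) l (𝓝 d)) (hy : Tendsto (fun i ↦ ‖y i‖) l (𝓝 d))
    (hxy : Tendsto (fun i ↦ ‖x i + y i‖) l (𝓝 (2 * d))) :
    Tendsto (fun i ↦ ‖x i - y i‖) l (𝓝 0) := by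
  rcases eq_or_ne d 0 with rfl | hd
  · exact squeeze_zero (fun _ ↦ norm_nonneg _) (fun i ↦ norm_sub_le (x i) (y i))
      (by simpa using hx.add hy)
  let R : ι → ℝ := fun i ↦ max ‖x i‖ ‖y i‖
  have hR_nonneg (i : ι) : 0 ≤ R i := (norm_nonneg _).trans (le_max_left _ _)
  have hR : Tendsto R l (𝓝 d) := by simpa using hx.max hy
  have norm_smul_R (i : ι) (v : E) : ‖(R i)⁻¹ • v‖ = (R i)⁻¹ * ‖v‖ := by
    rw [norm_smul, norm_inv, Real.norm_of_nonneg (hR_nonneg i)]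
  have hscaled : Tendsto (fun i ↦ ‖(R i)⁻¹ • x i - (R i)⁻¹ • y i‖) l (𝓝 0) := by
    refine tendsto_norm_sub_zero_of_norm_le_one (fun i ↦ ?_) (fun i ↦ ?_) ?_
    · rw [norm_smul_R]
      exact inv_mul_le_one_of_le₀ (le_max_left _ _) (hR_nonneg i)
    · rw [norm_smul_R]
      exact inv_mul_le_one_of_le₀ (le_max_right _ _) (hR_nonneg i)
    · simp_rw [← smul_add, norm_smul_R]
      have hlim := (hR.inv₀ hd).mul hxy
      rwa [show d⁻¹ * (2 * d) = 2 by field_simp] at hlim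
  have hmul : Tendsto (fun i ↦ R i * ‖(R i)⁻¹ • x i - (R i)⁻¹ • y i‖) l (𝓝 0) := by
    simpa using hR.mul hscaled
  refine hmul.congr' ?_
  filter_upwards [hR.eventually_ne hd] with i hi
  rw [← smul_sub, norm_smul_R, mul_inv_cancel_left₀ hi]

lemma cauchySeq_of_tendsto_norm_add {ι : Type*} [Nonempty ι] [SemilatticeSup ι] {w : ι → E} {d : ℝ}
    (hw : Tendsto (fun i ↦ ‖w i‖) atTop (𝓝 d))
    (hadd : Tendsto (fun ij : ι × ι ↦ ‖w ij.1 + w ij.2‖) atTop (𝓝 (2 * d))) : CauchySeq w := by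
  rw [cauchySeq_iff_tendsto_dist_atTop_0]
  simp_rw [dist_eq_norm]
  rw [← prod_atTop_atTop_eq] at hadd ⊢
  exact tendsto_norm_sub_zero_of_tendsto_norm_add (hw.comp tendsto_fst) (hw.comp tendsto_snd) hadd

variable [CompleteSpace E]

theorem nonempty_iInter_of_antitone_of_convex {C : ℕ → Set E} (hC : Antitone C)
    (hne : ∀ n, (C n).Nonempty) (hclosed : ∀ n, IsClosed (C n)) (hconv : ∀ n, Convex ℝ (C n))
    (hbdd : Bornology.IsBounded (C 0)) : (⋂ n, C n).Nonempty := by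
  let d : ℕ → ℝ := fun n ↦ Metric.infDist 0 (C n)
  have hd_le {n : ℕ} {v : E} (hv : v ∈ C n) : d n ≤ ‖v‖ := by
    simpa using Metric.infDist_le_dist_of_mem (x := 0) hv
  obtain ⟨D, hD⟩ : ∃ D, Tendsto d atTop (𝓝 D) := by
    obtain ⟨B, hB⟩ := hbdd.exists_norm_le
    refine ⟨_, tendsto_atTop_ciSup
      (fun m n hmn ↦ Metric.infDist_le_infDist_of_subset (hC hmn) (hne n)) ⟨B, ?_⟩⟩
    rintro _ ⟨n, rfl⟩
    obtain ⟨v, hv⟩ := hne n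
    exact (hd_le hv).trans (hB v (hC n.zero_le hv))
  have hnear (n : ℕ) : ∃ v ∈ C n, ‖v‖ < d n + 1 / (n + 1) := by
    simpa using (Metric.infDist_lt_iff (hne n)).1 (lt_add_of_pos_right (d n) Nat.one_div_pos_of_nat)
  choose w hwC hw using hnear
  have hw_norm : Tendsto (fun n ↦ ‖w n‖) atTop (𝓝 D) :=
    tendsto_of_tendsto_of_tendsto_of_le_of_le hD
      (by simpa using hD.add tendsto_one_div_add_atTop_nhds_zero_nat)
      (fun n ↦ hd_le (hwC n)) (fun n ↦ (hw n).le)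
  have hmid (i j : ℕ) : 2 * d (i ⊓ j) ≤ ‖w i + w j‖ := by
    have hmem : midpoint ℝ (w i) (w j) ∈ C (i ⊓ j) :=
      (hconv _).midpoint_mem (hC inf_le_left (hwC i)) (hC inf_le_right (hwC j))
    have hle := hd_le hmem
    simp only [midpoint_eq_smul_add, norm_smul, invOf_eq_inv, norm_inv, Real.norm_ofNat] at hle
    linarith
  have hcauchy : CauchySeq w := by
    refine cauchySeq_of_tendsto_norm_add hw_norm ?_
    rw [← prod_atTop_atTop_eq]
    exact tendsto_of_tendsto_of_tendsto_of_le_of_le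
      ((hD.comp (tendsto_inf_atTop _ tendsto_fst tendsto_snd)).const_mul 2)
      (two_mul D ▸ (hw_norm.comp tendsto_fst).add (hw_norm.comp tendsto_snd))
      (fun ij ↦ hmid ij.1 ij.2) (fun ij ↦ norm_add_le _ _)
  obtain ⟨v, hv⟩ := cauchySeq_tendsto_of_complete hcauchy
  refine ⟨v, Set.mem_iInter.2 fun n ↦ (hclosed n).mem_of_tendsto hv ?_⟩
  filter_upwards [eventually_ge_atTop n] with k hk using hC hk (hwC k)

theorem exists_isMinOn_of_convexOn_of_coercive {S : Set E} {f : E → ℝ} (hne : S.Nonempty)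
    (hclosed : IsClosed S) (hf : ConvexOn ℝ S f) (hlsc : LowerSemicontinuousOn f S)
    (hcoer : Tendsto f (Bornology.cobounded E ⊓ 𝓟 S) atTop) : ∃ y ∈ S, IsMinOn f S y := by
  -- Taking the infimum in `EReal` avoids proving beforehand that `f` is bounded below on `S`.
  obtain ⟨u, hu_anti, hu_lim, hu_mem⟩ :=
    exists_seq_tendsto_sInf (hne.image fun v ↦ (f v : EReal)) (OrderBot.bddBelow _)
  choose s hsS hs using hu_mem
  let C : ℕ → Set E := fun n ↦ {v ∈ S | f v ≤ f (s n)}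
  have hC_anti : Antitone C := fun m n hmn v hv ↦ by
    have hle : f (s n) ≤ f (s m) := EReal.coe_le_coe_iff.1 (by simpa only [hs] using hu_anti hmn)
    exact ⟨hv.1, hv.2.trans hle⟩
  have hC_closed (n : ℕ) : IsClosed (C n) := by
    obtain ⟨V, hV, hSV⟩ := lowerSemicontinuousOn_iff_preimage_Iic.1 hlsc (f (s n))
    have hCV : C n = S ∩ V := hSV
    exact hCV ▸ hclosed.inter hV
  have hC_bdd : Bornology.IsBounded (C 0) := by
    have hlarge := eventually_inf_principal.1 (hcoer.eventually_gt_atTop (f (s 0)))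
    refine Bornology.isBounded_def.2 (mem_of_superset hlarge fun v hv hvC ↦ ?_)
    exact (hv hvC.1).not_ge hvC.2
  obtain ⟨y, hy⟩ := nonempty_iInter_of_antitone_of_convex hC_anti (fun n ↦ ⟨s n, hsS n, le_rfl⟩)
    hC_closed (fun n ↦ hf.convex_le _) hC_bdd
  rw [Set.mem_iInter] at hy
  have hy_le : (f y : EReal) ≤ sInf ((fun v ↦ (f v : EReal)) '' S) :=
    ge_of_tendsto' hu_lim fun n ↦ hs n ▸ EReal.coe_le_coe_iff.2 (hy n).2
  refine ⟨y, (hy 0).1, fun v hv ↦ ?_⟩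
  exact EReal.coe_le_coe_iff.1 (hy_le.trans (sInf_le ⟨v, hv, rfl⟩))

end UniformlyConvex

section ConvexDifferentiable

variable {S : Set X} {f : X → ℝ} {f' : X →L[ℝ] ℝ} {x y : X}

lemma hasFDerivWithinAt_sub_le_of_convexOn (hf : ConvexOn ℝ S f)
    (hf' : HasFDerivWithinAt f f' S x) (hx : x ∈ S) (hy : y ∈ S) : f' (y - x) ≤ f y - f x := by
  let L : ℝ →ᵃ[ℝ] X := AffineMap.lineMap x y
  have hderiv : HasDerivWithinAt (f ∘ L) (f' (y - x)) (L ⁻¹' S) 0 :=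
    HasFDerivWithinAt.comp_hasDerivWithinAt 0 (t := S) (by simpa [L] using hf')
      AffineMap.hasDerivWithinAt_lineMap (Set.mapsTo_preimage L S)
  simpa [slope_def_field, L] using (hf.comp_affineMap L).le_slope_of_hasDerivWithinAt
    (by simpa [L] using hx) (by simpa [L] using hy) one_pos hderiv

lemma hasFDerivWithinAt_sub_nonneg_of_isMinOn (hS : Convex ℝ S)
    (hf' : HasFDerivWithinAt f f' S x) (hmin : IsMinOn f S x) (hx : x ∈ S) (hy : y ∈ S) :
    0 ≤ f' (y - x) :=
  hmin.localize.hasFDerivWithinAt_nonneg hf'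
    (sub_mem_posTangentConeAt_of_segment_subset (hS.segment_subset hx hy))

end ConvexDifferentiable

section SmoothNorm

lemma hasFDerivAt_norm_of_isLittleO {x : X} {f : X →L[ℝ] ℝ} (hf : ‖f‖ ≤ 1) (hfx : f x = ‖x‖)
    (hsecond : (fun h ↦ ‖x + h‖ + ‖x - h‖ - 2 * ‖x‖) =o[𝓝 0] fun h : X ↦ h) :
    HasFDerivAt (‖·‖) f x := by
  have hle (v : X) : f v ≤ ‖v‖ :=
    (le_abs_self _).trans ((f.le_of_opNorm_le hf v).trans_eq (one_mul _))
  rw [hasFDerivAt_iff_isLittleO_nhds_zero]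
  refine Asymptotics.IsLittleO.of_norm_left
    (Asymptotics.IsBigO.trans_isLittleO (Asymptotics.isBigO_of_le _ fun h ↦ ?_) hsecond)
  have hplus := hle (x + h)
  have hminus := hle (x - h)
  rw [map_add, hfx] at hplus
  rw [map_sub, hfx] at hminus
  rw [norm_norm, Real.norm_of_nonneg (by linarith)]
  exact le_trans (by linarith) (le_abs_self _)

lemma norm_add_smul_add_norm_sub_smul_le_modSmooth {u v : X} (hu : ‖u‖ = 1) (hv : ‖v‖ = 1)
    (τ : ℝ) : (‖u + τ • v‖ + ‖u - τ • v‖) / 2 - 1 ≤ modSmooth X τ := by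
  refine le_csSup ⟨|τ|, ?_⟩ ⟨u, v, hu, hv, rfl⟩
  rintro _ ⟨x, y, hx, hy, rfl⟩
  have hadd := norm_add_le x (τ • y)
  have hsub := norm_sub_le x (τ • y)
  rw [norm_smul, hx, hy, Real.norm_eq_abs] at hadd hsub
  linarith

lemma norm_add_add_norm_sub_le_modSmooth {x h : X} (hx : x ≠ 0) (hh : h ≠ 0) :
    ‖x + h‖ + ‖x - h‖ - 2 * ‖x‖ ≤ 2 * ‖x‖ * modSmooth X (‖h‖ / ‖x‖) := by
  have hdir : (‖h‖ / ‖x‖) • ‖h‖⁻¹ • h = ‖x‖⁻¹ • h := by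
    rw [smul_smul]
    congr 1
    field_simp
  have hunit := norm_add_smul_add_norm_sub_smul_le_modSmooth (norm_smul_inv_norm (𝕜 := ℝ) hx)
    (norm_smul_inv_norm (𝕜 := ℝ) hh) (‖h‖ / ‖x‖)
  simp only [RCLike.ofReal_real_eq_id, id_eq] at hunit
  rw [hdir, ← smul_add, ← smul_sub, norm_smul, norm_smul, norm_inv, norm_norm] at hunit
  calc ‖x + h‖ + ‖x - h‖ - 2 * ‖x‖
      = 2 * ‖x‖ * ((‖x‖⁻¹ * ‖x + h‖ + ‖x‖⁻¹ * ‖x - h‖) / 2 - 1) := by field_simp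
    _ ≤ 2 * ‖x‖ * modSmooth X (‖h‖ / ‖x‖) := by gcongr

lemma UnifSmooth.isLittleO_norm_add_add_norm_sub (hX : UnifSmooth X) {x : X} (hx : x ≠ 0) :
    (fun h ↦ ‖x + h‖ + ‖x - h‖ - 2 * ‖x‖) =o[𝓝 0] fun h : X ↦ h := by
  have hx_pos : 0 < ‖x‖ := norm_pos_iff.2 hx
  rw [Asymptotics.isLittleO_iff]
  intro c hc
  have hmod : ∀ᶠ τ in 𝓝 (0 : ℝ), 0 < τ → modSmooth X τ / τ < c / 2 :=
    eventually_nhdsWithin_iff.1 (hX.eventually_lt_const (half_pos hc))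
  have hratio : Tendsto (fun h : X ↦ ‖h‖ / ‖x‖) (𝓝 0) (𝓝 0) := by
    simpa using tendsto_norm_zero.div_const ‖x‖
  filter_upwards [hratio.eventually hmod] with h hh
  rcases eq_or_ne h 0 with rfl | h_ne
  · simp [two_mul]
  have hτ : 0 < ‖h‖ / ‖x‖ := div_pos (norm_pos_iff.2 h_ne) hx_pos
  have hsecond_nonneg : 0 ≤ ‖x + h‖ + ‖x - h‖ - 2 * ‖x‖ := by
    have htri := norm_add_le (x + h) (x - h)
    rw [add_add_sub_cancel, ← two_smul ℝ x, norm_smul, Real.norm_ofNat] at htri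
    linarith
  rw [Real.norm_of_nonneg hsecond_nonneg]
  calc ‖x + h‖ + ‖x - h‖ - 2 * ‖x‖
      ≤ 2 * ‖x‖ * modSmooth X (‖h‖ / ‖x‖) := norm_add_add_norm_sub_le_modSmooth hx h_ne
    _ ≤ 2 * ‖x‖ * (c / 2 * (‖h‖ / ‖x‖)) := by
      gcongr
      exact ((div_lt_iff₀ hτ).1 (hh hτ)).le
    _ = c * ‖h‖ := by field_simp

theorem UnifSmooth.differentiableAt_norm (hX : UnifSmooth X) {x : X} (hx : x ≠ 0) :
    DifferentiableAt ℝ (‖·‖) x := by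
  obtain ⟨f, hf, hfx⟩ := exists_dual_vector'' ℝ x
  exact (hasFDerivAt_norm_of_isLittleO hf hfx
    (hX.isLittleO_norm_add_add_norm_sub hx)).differentiableAt

end SmoothNorm

theorem UnifConvex.uniformConvexSpace {Y : Type*} [NormedAddCommGroup Y] (hY : UnifConvex Y) :
    UniformConvexSpace Y := by
  refine ⟨fun ε hε ↦ ?_⟩
  rcases le_or_gt ε 2 with hε2 | hε2
  · refine ⟨2 * modConvex Y ε, mul_pos two_pos (hY ε hε hε2), fun x hx y hy hxy ↦ ?_⟩
    have hmod : modConvex Y ε ≤ 1 - ‖x + y‖ / 2 := by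
      refine csInf_le ⟨0, ?_⟩ ⟨x, y, hx, hy, hxy, rfl⟩
      rintro _ ⟨u, v, hu, hv, -, rfl⟩
      linarith [norm_add_le u v]
    linarith
  · exact ⟨1, one_pos, fun x hx y hy hxy ↦ by linarith [norm_sub_le x y]⟩

section NormPower

variable {E : Type*} [SeminormedAddCommGroup E] [NormedSpace ℝ E] {p : ℝ}

lemma convexOn_norm_rpow (hp : 1 ≤ p) : ConvexOn ℝ Set.univ fun v : E ↦ ‖v‖ ^ p := by
  refine ⟨convex_univ, fun x _ y _ a b ha hb hab ↦ ?_⟩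
  calc ‖a • x + b • y‖ ^ p
      ≤ (a • ‖x‖ + b • ‖y‖) ^ p := by
        gcongr
        exact convexOn_univ_norm.2 trivial trivial ha hb hab
    _ ≤ a • ‖x‖ ^ p + b • ‖y‖ ^ p :=
        (convexOn_rpow hp).2 (norm_nonneg x) (norm_nonneg y) ha hb hab

lemma convexOn_one_div_mul_norm_rpow (hp : 1 ≤ p) :
    ConvexOn ℝ Set.univ fun v : E ↦ 1 / p * ‖v‖ ^ p :=
  (convexOn_norm_rpow hp).smul (by positivity)

lemma tendsto_one_div_mul_norm_rpow_sub_cobounded (hp : 1 < p) (φ : E →L[ℝ] ℝ) :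
    Tendsto (fun v ↦ 1 / p * ‖v‖ ^ p - φ v) (Bornology.cobounded E) atTop := by
  have hreal : Tendsto (fun t : ℝ ↦ t * (1 / p * t ^ (p - 1) - ‖φ‖)) atTop atTop :=
    tendsto_id.atTop_mul_atTop₀ (tendsto_atTop_add_const_right _ _
      ((tendsto_rpow_atTop (sub_pos.2 hp)).const_mul_atTop (by positivity)))
  refine tendsto_atTop_mono (fun v ↦ ?_) (hreal.comp tendsto_norm_cobounded_atTop)
  have hpow : ‖v‖ ^ p = ‖v‖ * ‖v‖ ^ (p - 1) := by
    rw [← Real.rpow_one_add' (norm_nonneg v) (by linarith), add_sub_cancel]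
  have hφ : φ v ≤ ‖φ‖ * ‖v‖ := (le_abs_self _).trans (φ.le_opNorm v)
  calc ‖v‖ * (1 / p * ‖v‖ ^ (p - 1) - ‖φ‖)
      = 1 / p * ‖v‖ ^ p - ‖φ‖ * ‖v‖ := by rw [hpow]; ring
    _ ≤ 1 / p * ‖v‖ ^ p - φ v := by gcongr

theorem exists_isMinOn_one_div_mul_norm_rpow_sub [UniformConvexSpace E] [CompleteSpace E]
    {S : Set E} (hne : S.Nonempty) (hclosed : IsClosed S) (hconv : Convex ℝ S) (hp : 1 < p)
    (φ : E →L[ℝ] ℝ) : ∃ y ∈ S, IsMinOn (fun v ↦ 1 / p * ‖v‖ ^ p - φ v) S y := by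
  have hcont : Continuous fun v ↦ 1 / p * ‖v‖ ^ p - φ v :=
    ((continuous_norm.rpow_const fun _ ↦ Or.inr (by positivity)).const_mul _).sub φ.continuous
  have hconvex : ConvexOn ℝ Set.univ fun v ↦ 1 / p * ‖v‖ ^ p - φ v :=
    (convexOn_one_div_mul_norm_rpow hp.le).sub (φ.toLinearMap.concaveOn convex_univ)
  exact exists_isMinOn_of_convexOn_of_coercive hne hclosed
    (hconvex.subset (Set.subset_univ S) hconv) (hcont.lowerSemicontinuous.lowerSemicontinuousOn S)
    ((tendsto_one_div_mul_norm_rpow_sub_cobounded hp φ).mono_left inf_le_left)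

lemma hasFDerivAt_norm_rpow_zero (hp : 1 < p) :
    HasFDerivAt (fun v : X ↦ ‖v‖ ^ p) (0 : X →L[ℝ] ℝ) 0 := by
  have hreal :=
    (hasDerivAt_norm_rpow (0 : ℝ) hp).isLittleO.comp_tendsto (tendsto_norm_zero (E := X))
  refine .of_isLittleO (Asymptotics.isLittleO_norm_right.1 ?_)
  simpa [Function.comp_def] using hreal

end NormPower

section Bregman

variable {p : ℝ} {S : Set X} {x y z : X}

lemma hasFDerivAt_dualityMap (hp : 1 < p) (hx : x ≠ 0 → DifferentiableAt ℝ (‖·‖) x) :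
    HasFDerivAt (fun v : X ↦ 1 / p * ‖v‖ ^ p) (dualityMap p x) x := by
  refine (DifferentiableAt.const_mul ?_ _).hasFDerivAt
  rcases eq_or_ne x 0 with rfl | hx_ne
  · exact (hasFDerivAt_norm_rpow_zero hp).differentiableAt
  · exact (hx hx_ne).rpow_const (Or.inl (norm_ne_zero_iff.2 hx_ne))

lemma bregmanDist_nonneg (hp : 1 < p) (hx : x ≠ 0 → DifferentiableAt ℝ (‖·‖) x) (y : X) :
    0 ≤ bregmanDist p y x :=
  sub_nonneg.2 <| hasFDerivWithinAt_sub_le_of_convexOn (convexOn_one_div_mul_norm_rpow hp.le)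
    (hasFDerivAt_dualityMap hp hx).hasFDerivWithinAt (Set.mem_univ x) (Set.mem_univ y)

lemma bregmanDist_eq_add (p : ℝ) (x y z : X) :
    bregmanDist p z x =
      bregmanDist p z y + bregmanDist p y x + (dualityMap p y - dualityMap p x) (z - y) := by
  simp only [bregmanDist, map_sub, sub_apply]
  ring

lemma isMinOn_bregmanDist_iff :
    IsMinOn (fun m ↦ bregmanDist p m x) S y ↔
      IsMinOn (fun m ↦ 1 / p * ‖m‖ ^ p - dualityMap p x m) S y := by
  simp only [isMinOn_iff, bregmanDist, map_sub]
  exact forall₂_congr fun m _ ↦ ⟨fun h ↦ by linarith, fun h ↦ by linarith⟩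

theorem bregmanDist_add_bregmanDist_le_of_isMinOn (hp : 1 < p)
    (hy : y ≠ 0 → DifferentiableAt ℝ (‖·‖) y) (hS : Convex ℝ S) (hyS : y ∈ S)
    (hmin : IsMinOn (fun m ↦ bregmanDist p m x) S y) (hz : z ∈ S) :
    bregmanDist p z y + bregmanDist p y x ≤ bregmanDist p z x := by
  have hvar : 0 ≤ (dualityMap p y - dualityMap p x) (z - y) :=
    hasFDerivWithinAt_sub_nonneg_of_isMinOn hS
      ((hasFDerivAt_dualityMap hp hy).sub (dualityMap p x).hasFDerivAt).hasFDerivWithinAt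
      (isMinOn_bregmanDist_iff.1 hmin) hyS hz
  rw [bregmanDist_eq_add p x y z]
  exact le_add_of_nonneg_right hvar

variable [UniformConvexSpace X] [CompleteSpace X]

theorem bregmanProj_mem_and_isMinOn (hp : 1 < p) (hne : S.Nonempty) (hclosed : IsClosed S)
    (hconv : Convex ℝ S) (x : X) :
    bregmanProj p S x ∈ S ∧ IsMinOn (fun m ↦ bregmanDist p m x) S (bregmanProj p S x) := by
  obtain ⟨y, hyS, hy⟩ :=
    exists_isMinOn_one_div_mul_norm_rpow_sub hne hclosed hconv hp (dualityMap p x)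
  exact Classical.epsilon_spec
    (p := fun y ↦ y ∈ S ∧ ∀ m ∈ S, bregmanDist p y x ≤ bregmanDist p m x)
    ⟨y, hyS, isMinOn_bregmanDist_iff.2 hy⟩

theorem bregmanDist_bregmanProj_le (hnorm : ∀ v : X, v ≠ 0 → DifferentiableAt ℝ (‖·‖) v)
    (hp : 1 < p) (hclosed : IsClosed S) (hconv : Convex ℝ S) (hz : z ∈ S) (x : X) :
    bregmanDist p z (bregmanProj p S x) ≤ bregmanDist p z x := by
  obtain ⟨hmem, hmin⟩ := bregmanProj_mem_and_isMinOn hp ⟨z, hz⟩ hclosed hconv x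
  exact (le_add_of_nonneg_right (bregmanDist_nonneg hp (hnorm x) _)).trans
    (bregmanDist_add_bregmanDist_le_of_isMinOn hp (hnorm _) hconv hmem hmin hz)

end Bregman

theorem statement12_general [UniformConvexSpace X] [CompleteSpace X]
    (hnorm : ∀ v : X, v ≠ 0 → DifferentiableAt ℝ (‖·‖) v) {p : ℝ} (hp : 1 < p) {K : Set X}
    {x : ℕ → X} (hproj : ∀ n, ∃ S, IsClosed S ∧ Convex ℝ S ∧ K ⊆ S ∧
      x (n + 1) = bregmanProj p S (x n)) :
    BregmanMonotone p K x := by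
  refine fun z hz k l hlk ↦ antitone_nat_of_succ_le (f := fun n ↦ bregmanDist p z (x n)) ?_ hlk
  intro n
  obtain ⟨S, hclosed, hconv, hKS, hstep⟩ := hproj n
  exact hstep ▸ bregmanDist_bregmanProj_le hnorm hp hclosed hconv (hKS hz) (x n)

theorem statement12 {X : Type*} [NormedAddCommGroup X] [NormedSpace ℝ X] [CompleteSpace X]
    (hconv : UnifConvex X) (hsmooth : UnifSmooth X) (p : ℝ) (hp : 1 < p)
    (M N : Submodule ℝ X) (hM : IsClosed (M : Set X)) (hN : IsClosed (N : Set X))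
    (a : X) (x : ℕ → X) (hx0 : x 0 = a)
    (hodd : ∀ n : ℕ, x (2 * n + 1) = bregmanProj p (M : Set X) (x (2 * n)))
    (heven : ∀ n : ℕ, x (2 * n + 2) = bregmanProj p (N : Set X) (x (2 * n + 1))) :
    BregmanMonotone p (((M ⊓ N : Submodule ℝ X) : Set X)) x := by
  have := hconv.uniformConvexSpace
  refine statement12_general (fun _ ↦ hsmooth.differentiableAt_norm) hp fun n ↦ ?_
  obtain ⟨k, rfl | rfl⟩ := n.even_or_odd'
  exacts [⟨M, hM, M.convex, inf_le_left, hodd k⟩, ⟨N, hN, N.convex, inf_le_right, heven k⟩]
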